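/- arXiv:1506.02913 — 2 statements merged into one kernel-verified Lean document; each statement's English description precedes it below -/
import Mathlib

section
/- (Ehrenfeucht's compactness property.) For every n and every alphabet A, every independent system of word equations in n variables, with solutions taken in the free monoid on A, is finite. -/
/-- A monoid morphism `h` from the free monoid on the variables `Ξ` to a monoid `M`
is a solution of the equation `E = (U, V)` if `h U = h V`. -/
def IsSolution {Ξ M : Type*} [Monoid M] (h : FreeMonoid Ξ →* M)
    (E : FreeMonoid Ξ × FreeMonoid Ξ) : Prop :=
  h E.1 = h E.2

/-!
Over a commutative ring, the matrix solutions of a word equation are the zeros of polynomials in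
the entries of the matrices substituted for the variables. By Hilbert's basis theorem finitely many
equations of a system generate the ideal of all these polynomials, hence have the same matrix
solutions as the whole system, so an independent system has no further equations. Free monoids are
covered because a letter `a` can be represented by the affine map `t ↦ X * t + a`: the word
`a₀ a₁ ⋯ aₘ` then acts with translation part `a₀ + a₁ X + ⋯ + aₘ Xᵐ`, from which it can be read off.
-/

open Polynomial

theorem isSolution_comp_iff {Ξ M N : Type*} [Monoid M] [Monoid N] {f : M →* N}
    (hf : Function.Injective f) {h : FreeMonoid Ξ →* M} {E : FreeMonoid Ξ × FreeMonoid Ξ} :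
    IsSolution (f.comp h) E ↔ IsSolution h E :=
  hf.eq_iff

section MatrixSolutions

variable {Ξ d R : Type*} [Fintype d] [DecidableEq d] [CommRing R]

variable (Ξ d) in
/-- The universal representation of the free monoid on `Ξ` by `d × d` matrices over commutative
rings: the variable `x` is sent to a matrix whose entries are independent indeterminates. -/
noncomputable def genericRep : FreeMonoid Ξ →* Matrix d d (MvPolynomial (Ξ × d × d) ℤ) :=
  FreeMonoid.lift fun x => Matrix.of fun i j => MvPolynomial.X (x, i, j)

/-- The specialization of the indeterminates of `genericRep` to the matrix entries of the
representation `h`. -/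
noncomputable def specialization (h : FreeMonoid Ξ →* Matrix d d R) :
    MvPolynomial (Ξ × d × d) ℤ →+* R :=
  MvPolynomial.eval₂Hom (Int.castRingHom R) fun y => h (FreeMonoid.of y.1) y.2.1 y.2.2

theorem mapMatrix_specialization_genericRep (h : FreeMonoid Ξ →* Matrix d d R)
    (w : FreeMonoid Ξ) : (specialization h).mapMatrix (genericRep Ξ d w) = h w := by
  suffices ((specialization h).mapMatrix.toMonoidHom).comp (genericRep Ξ d) = h from
    DFunLike.congr_fun this w
  ext x i j
  simp [genericRep, specialization]

theorem specialization_genericRep_apply (h : FreeMonoid Ξ →* Matrix d d R)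
    (w : FreeMonoid Ξ) (i j : d) : specialization h (genericRep Ξ d w i j) = h w i j :=
  congr_fun₂ (mapMatrix_specialization_genericRep h w) i j

variable (d) in
/-- The ideal of polynomial conditions on the entries of `d × d` matrices that expresses the
word equation `E`. -/
noncomputable def equationIdeal (E : FreeMonoid Ξ × FreeMonoid Ξ) :
    Ideal (MvPolynomial (Ξ × d × d) ℤ) :=
  Ideal.span (Set.range fun y : d × d =>
    genericRep Ξ d E.1 y.1 y.2 - genericRep Ξ d E.2 y.1 y.2)

theorem isSolution_iff_equationIdeal_le_ker {h : FreeMonoid Ξ →* Matrix d d R}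
    {E : FreeMonoid Ξ × FreeMonoid Ξ} :
    IsSolution h E ↔ equationIdeal d E ≤ RingHom.ker (specialization h) := by
  simp only [IsSolution, equationIdeal, Ideal.span_le, Set.range_subset_iff, SetLike.mem_coe,
    RingHom.mem_ker, map_sub, specialization_genericRep_apply, sub_eq_zero, Prod.forall,
    Matrix.ext_iff]

variable (d) in
theorem exists_finite_subset_forall_isSolution [Finite Ξ]
    (S : Set (FreeMonoid Ξ × FreeMonoid Ξ)) :
    ∃ T ⊆ S, T.Finite ∧ ∀ {R : Type*} [CommRing R] (h : FreeMonoid Ξ →* Matrix d d R),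
      (∀ E ∈ T, IsSolution h E) → ∀ E ∈ S, IsSolution h E := by
  classical
  obtain ⟨t, htS, ht⟩ := CompleteLattice.WellFoundedGT.isSupFiniteCompact
    (Ideal (MvPolynomial (Ξ × d × d) ℤ)) (equationIdeal d '' S)
  obtain ⟨T, hTS, rfl⟩ := Finset.subset_set_image_iff.mp htS
  refine ⟨T, hTS, T.finite_toSet, fun h hT E hE => ?_⟩
  rw [isSolution_iff_equationIdeal_le_ker]
  calc
    equationIdeal d E ≤ sSup (equationIdeal d '' S) := le_sSup (Set.mem_image_of_mem _ hE)
    _ = (T.image (equationIdeal d)).sup id := ht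
    _ ≤ RingHom.ker (specialization h) := by
      rw [Finset.sup_image]
      exact Finset.sup_le fun E' hE' => isSolution_iff_equationIdeal_le_ker.mp (hT E' hE')

theorem independent_system_of_word_equations_finite_general [Finite Ξ] {M : Type*} [Monoid M]
    (ι : M →* Matrix d d R) (hι : Function.Injective ι) (S : Set (FreeMonoid Ξ × FreeMonoid Ξ))
    (hind : ∀ e ∈ S, ∃ h : FreeMonoid Ξ →* M,
      (∀ e' ∈ S, e' ≠ e → IsSolution h e') ∧ ¬ IsSolution h e) :
    S.Finite := by
  obtain ⟨T, hTS, hTfin, hT⟩ := exists_finite_subset_forall_isSolution d S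
  refine hTfin.subset fun e he => ?_
  by_contra heT
  obtain ⟨h, hsol, hnot⟩ := hind e he
  have solves_T : ∀ e' ∈ T, IsSolution (ι.comp h) e' := fun e' he' =>
    (isSolution_comp_iff hι).mpr (hsol e' (hTS he') (ne_of_mem_of_not_mem he' heT))
  exact hnot ((isSolution_comp_iff hι).mp (hT (ι.comp h) solves_T e he))

end MatrixSolutions

section AffineRepresentation

variable {A R : Type*} [Semiring R]

/-- The polynomial whose coefficients, from the constant one upwards, are the values under `c` of
the letters of a word. -/
noncomputable def wordPolynomial (c : A → R) : List A → R[X]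
  | [] => 0
  | a :: l => X * wordPolynomial c l + C (c a)

theorem coeff_wordPolynomial (c : A → R) (l : List A) (i : ℕ) :
    (wordPolynomial c l).coeff i = l[i]?.elim 0 c := by
  induction l generalizing i with
  | nil => simp [wordPolynomial]
  | cons a l ih => cases i <;> simp [wordPolynomial, ih, coeff_C]

theorem wordPolynomial_injective {c : A → R} (hc : Function.Injective c) (hc0 : ∀ a, c a ≠ 0) :
    Function.Injective (wordPolynomial c) := by
  have elim_injective : Function.Injective fun o : Option A => o.elim 0 c := by
    rintro (_ | a) (_ | b) hab
    · rfl
    · exact absurd hab.symm (hc0 b)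
    · exact absurd hab (hc0 a)
    · exact congrArg some (hc hab)
  intro l l' hll'
  refine List.ext_getElem? fun i => elim_injective ?_
  simp only [← coeff_wordPolynomial, hll']

/-- The representation of the free monoid on `A` by affine maps of the line over `R[X]`, written
as `2 × 2` matrices, in which the letter `a` acts as `t ↦ X * t + c a`. -/
noncomputable def affineRep (c : A → R) : FreeMonoid A →* Matrix (Fin 2) (Fin 2) R[X] :=
  FreeMonoid.lift fun a => !![X, C (c a); 0, 1]

theorem affineRep_eq (c : A → R) (w : FreeMonoid A) :
    affineRep c w = !![X ^ w.length, wordPolynomial c w.toList; 0, 1] := by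
  induction w using FreeMonoid.inductionOn' with
  | one => simp [wordPolynomial, Matrix.one_fin_two]
  | of_mul a w ih =>
    rw [map_mul, ih]
    simp [affineRep, wordPolynomial, pow_succ', add_comm 1]

theorem affineRep_injective {c : A → R} (hc : Function.Injective c) (hc0 : ∀ a, c a ≠ 0) :
    Function.Injective (affineRep c) := by
  intro w w' hww'
  have translation_eq : affineRep c w 0 1 = affineRep c w' 0 1 := by rw [hww']
  simp only [affineRep_eq] at translation_eq
  exact FreeMonoid.toList.injective (wordPolynomial_injective hc hc0 translation_eq)

end AffineRepresentation

/-- Ehrenfeucht's compactness property: every independent system of word equations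
in `n` variables, with solutions in the free monoid on the alphabet `A`, is finite. -/
theorem independent_system_of_word_equations_finite (n : ℕ) (A : Type*)
    (S : Set (FreeMonoid (Fin n) × FreeMonoid (Fin n)))
    (hind : ∀ e ∈ S, ∃ h : FreeMonoid (Fin n) →* FreeMonoid A,
      (∀ e' ∈ S, e' ≠ e → IsSolution h e') ∧ ¬ IsSolution h e) :
    S.Finite :=
  independent_system_of_word_equations_finite_general (affineRep (MvPolynomial.X (R := ℤ)))
    (affineRep_injective (MvPolynomial.X_injective (R := ℤ)) MvPolynomial.X_ne_zero) S hind
end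

section
/- With variables x, y, z, the pair of word equations xyz = zyx and xyyz = zyyx is an independent system, with solutions taken in the free monoid on two letters, and this system has a nonperiodic solution. Hence is'(3) ≥ 2. -/
/-- A solution is periodic if the images of all variables are powers of a common word. -/
def IsPeriodic {Ξ A : Type*} (h : FreeMonoid Ξ →* FreeMonoid A) : Prop :=
  ∃ t : FreeMonoid A, ∀ v : Ξ, ∃ k : ℕ, h (FreeMonoid.of v) = t ^ k

/-- The variable `x`. -/
def x : FreeMonoid (Fin 3) := FreeMonoid.of 0
/-- The variable `y`. -/
def y : FreeMonoid (Fin 3) := FreeMonoid.of 1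
/-- The variable `z`. -/
def z : FreeMonoid (Fin 3) := FreeMonoid.of 2

/-- The equation `xyz = zyx`. -/
def E1 : FreeMonoid (Fin 3) × FreeMonoid (Fin 3) := (x * y * z, z * y * x)
/-- The equation `xyyz = zyyx`. -/
def E2 : FreeMonoid (Fin 3) × FreeMonoid (Fin 3) := (x * y * y * z, z * y * y * x)

/-!
Both equations belong to the family `x yᵐ z = z yᵐ x`. If `z` takes the value of `x yⁿ x`, then in
a cancellative monoid the `m`-th equation becomes `yᵐ x yⁿ = yⁿ x yᵐ`, that is, `x` commutes with
`y ^ |m - n|`. For distinct letters `x` and `y` this happens only for `m = n`. Assigning distinct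
letters to `x` and `y`, and the letter of `x` to `z`, solves all equations of the family, but not
periodically, since the values of the variables under a periodic morphism commute.
-/

theorem IsPeriodic.commute {Ξ A : Type*} {h : FreeMonoid Ξ →* FreeMonoid A} (hh : IsPeriodic h)
    (u v : Ξ) : Commute (h (FreeMonoid.of u)) (h (FreeMonoid.of v)) := by
  obtain ⟨t, ht⟩ := hh
  obtain ⟨k, hk⟩ := ht u
  obtain ⟨l, hl⟩ := ht v
  rw [hk, hl]
  exact Commute.pow_pow_self t k l

theorem commute_of_of_pow_iff {A : Type*} {a b : A} {k : ℕ} :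
    Commute (FreeMonoid.of a) (FreeMonoid.of b ^ k) ↔ a = b ∨ k = 0 := by
  refine ⟨fun hab => ?_, ?_⟩
  · cases k with
    | zero => exact Or.inr rfl
    | succ k =>
      rw [pow_succ', commute_iff_eq, mul_assoc] at hab
      -- A word is its list of letters, so this compares the first letters of the two sides.
      exact Or.inl (List.cons.inj hab).1
  · rintro (rfl | rfl)
    · exact Commute.self_pow _ k
    · exact Commute.one_right _

theorem pow_mul_mul_pow_add_comm_iff {M : Type*} [CancelMonoid M] {a b : M} {m k : ℕ} :
    b ^ m * a * b ^ (m + k) = b ^ (m + k) * a * b ^ m ↔ Commute a (b ^ k) := by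
  rw [commute_iff_eq, pow_add b m k]
  nth_rw 1 [(Commute.pow_pow_self b m k).eq]
  simp only [← mul_assoc, mul_left_inj]
  simp only [mul_assoc, mul_right_inj]

theorem of_pow_mul_of_mul_of_pow_comm_iff {A : Type*} {a b : A} (hab : a ≠ b) {m n : ℕ} :
    FreeMonoid.of b ^ m * FreeMonoid.of a * FreeMonoid.of b ^ n =
      FreeMonoid.of b ^ n * FreeMonoid.of a * FreeMonoid.of b ^ m ↔ m = n := by
  wlog hmn : m ≤ n generalizing m n
  · rw [eq_comm, this (le_of_not_ge hmn), eq_comm]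
  obtain ⟨k, rfl⟩ := Nat.exists_eq_add_of_le hmn
  simp [pow_mul_mul_pow_add_comm_iff, commute_of_of_pow_iff, hab]

/-- The equation `x yᵐ z = z yᵐ x`, the common form of `E1` and `E2`. -/
def swapEquation (m : ℕ) : FreeMonoid (Fin 3) × FreeMonoid (Fin 3) :=
  (x * y ^ m * z, z * y ^ m * x)

theorem swapEquation_one : swapEquation 1 = E1 := by
  rw [swapEquation, E1, pow_one]

theorem swapEquation_two : swapEquation 2 = E2 := by
  simp only [swapEquation, E2, pow_two, mul_assoc]

theorem isSolution_lift_swapEquation_iff {M : Type*} [Monoid M] {a b c : M} {m : ℕ} :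
    IsSolution (FreeMonoid.lift ![a, b, c]) (swapEquation m) ↔ a * b ^ m * c = c * b ^ m * a := by
  simp [IsSolution, swapEquation, x, y, z]

theorem isSolution_lift_sandwich_iff {M : Type*} [CancelMonoid M] {a b : M} {m n : ℕ} :
    IsSolution (FreeMonoid.lift ![a, b, a * b ^ n * a]) (swapEquation m) ↔
      b ^ m * a * b ^ n = b ^ n * a * b ^ m := by
  simp only [isSolution_lift_swapEquation_iff, ← mul_assoc, mul_left_inj]
  simp only [mul_assoc, mul_right_inj]

theorem isSolution_lift_sandwich_of_iff {A : Type*} {a b : A} (hab : a ≠ b) {m n : ℕ} :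
    IsSolution (FreeMonoid.lift ![FreeMonoid.of a, FreeMonoid.of b,
      FreeMonoid.of a * FreeMonoid.of b ^ n * FreeMonoid.of a]) (swapEquation m) ↔ m = n := by
  rw [isSolution_lift_sandwich_iff, of_pow_mul_of_mul_of_pow_comm_iff hab]

section Alphabet

variable (A : Type*) [Nontrivial A]

theorem exists_isSolution_swapEquation_and_not {m n : ℕ} (hmn : m ≠ n) :
    ∃ h : FreeMonoid (Fin 3) →* FreeMonoid A,
      IsSolution h (swapEquation n) ∧ ¬ IsSolution h (swapEquation m) := by
  obtain ⟨a, b, hab⟩ := exists_pair_ne A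
  exact ⟨_, (isSolution_lift_sandwich_of_iff hab).2 rfl,
    (isSolution_lift_sandwich_of_iff hab).not.2 hmn⟩

theorem exists_isSolution_swapEquation_and_not_isPeriodic :
    ∃ h : FreeMonoid (Fin 3) →* FreeMonoid A,
      (∀ m, IsSolution h (swapEquation m)) ∧ ¬ IsPeriodic h := by
  obtain ⟨a, b, hab⟩ := exists_pair_ne A
  refine ⟨FreeMonoid.lift ![FreeMonoid.of a, FreeMonoid.of b, FreeMonoid.of a],
    fun m => isSolution_lift_swapEquation_iff.2 rfl, fun hper => ?_⟩
  have hcomm : Commute (FreeMonoid.of a) (FreeMonoid.of b ^ 1) := by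
    simpa using hper.commute 0 1
  exact (commute_of_of_pow_iff.1 hcomm).elim hab one_ne_zero

theorem pair_independent_with_nonperiodic_solution_general {m n : ℕ} (hmn : m ≠ n) :
    (∃ h : FreeMonoid (Fin 3) →* FreeMonoid A,
      IsSolution h (swapEquation n) ∧ ¬ IsSolution h (swapEquation m)) ∧
    (∃ h : FreeMonoid (Fin 3) →* FreeMonoid A,
      IsSolution h (swapEquation m) ∧ ¬ IsSolution h (swapEquation n)) ∧
    (∃ h : FreeMonoid (Fin 3) →* FreeMonoid A,
      IsSolution h (swapEquation m) ∧ IsSolution h (swapEquation n) ∧ ¬ IsPeriodic h) := by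
  obtain ⟨h, hsol, hper⟩ := exists_isSolution_swapEquation_and_not_isPeriodic A
  exact ⟨exists_isSolution_swapEquation_and_not A hmn,
    exists_isSolution_swapEquation_and_not A hmn.symm, h, hsol m, hsol n, hper⟩

end Alphabet

/-- The pair of word equations `xyz = zyx` and `xyyz = zyyx` is an independent system,
with solutions taken in the free monoid on two letters, and the system has a nonperiodic
solution. Hence is'(3) ≥ 2. -/
theorem pair_independent_with_nonperiodic_solution :
    (∃ h : FreeMonoid (Fin 3) →* FreeMonoid (Fin 2), IsSolution h E2 ∧ ¬ IsSolution h E1) ∧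
    (∃ h : FreeMonoid (Fin 3) →* FreeMonoid (Fin 2), IsSolution h E1 ∧ ¬ IsSolution h E2) ∧
    (∃ h : FreeMonoid (Fin 3) →* FreeMonoid (Fin 2),
      IsSolution h E1 ∧ IsSolution h E2 ∧ ¬ IsPeriodic h) := by
  rw [← swapEquation_one, ← swapEquation_two]
  exact pair_independent_with_nonperiodic_solution_general (Fin 2) one_lt_two.ne
end
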